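/- There are universal constants C₁, C₂ > 0 such that for any 0 < ε, β < 1, any q ∈ {1, 2}, any finite metric space ([m], d) of diameter at most 1, and any k ≤ m, there exists an ε-DP algorithm that, on any input dataset D of n points of [m], outputs a set S ⊆ [m] with |S| = k satisfying, with probability at least 1 − β, cost^q(S; D) ≤ C₁·OPT^q_k(D) + C₂·k·log(m·n/β)/ε. -/

import Mathlib

open scoped ENNReal

noncomputable section

/-- A mechanism `M` is `ε`-add-DP: for every dataset `D` and element `x`,
with `D ∪ {x}` and `D` as the neighboring pair, the probability of every outcome
set under `M (D ∪ {x})` is at most `e^ε` times that under `M D`. -/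
def AddDP {X : Type*} {O : Type*} (M : Multiset X → PMF O) (ε : ℝ) : Prop :=
  ∀ (D : Multiset X) (x : X) (S : Set O),
    (M (x ::ₘ D)).toOuterMeasure S ≤ ENNReal.ofReal (Real.exp ε) * (M D).toOuterMeasure S

/-- A mechanism `M` is (two-sided) `ε`-DP with respect to add-remove neighbors. -/
def PureDP {X : Type*} {O : Type*} (M : Multiset X → PMF O) (ε : ℝ) : Prop :=
  ∀ (D : Multiset X) (x : X) (S : Set O),
    (M (x ::ₘ D)).toOuterMeasure S ≤ ENNReal.ofReal (Real.exp ε) * (M D).toOuterMeasure S ∧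
    (M D).toOuterMeasure S ≤ ENNReal.ofReal (Real.exp ε) * (M (x ::ₘ D)).toOuterMeasure S

/-- A finite metric space on `[m]` with diameter at most `1`. -/
structure FinMetric (m : ℕ) where
  d : Fin m → Fin m → ℝ
  nonneg : ∀ a b, 0 ≤ d a b
  refl : ∀ a, d a a = 0
  eq_of_d_eq_zero : ∀ a b, d a b = 0 → a = b
  symm : ∀ a b, d a b = d b a
  triangle : ∀ a b c, d a c ≤ d a b + d b c
  diam_le_one : ∀ a b, d a b ≤ 1

/-- The `(·)^q` clustering cost `cost^q(S; D) = ∑_{x ∈ D} min_{c ∈ S} d(c, x)^q`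
(with the convention that the per-point cost is `1` when `S = ∅`). -/
noncomputable def costq {m : ℕ} (Met : FinMetric m) (q : ℕ) (S : Finset (Fin m))
    (D : Multiset (Fin m)) : ℝ :=
  (D.map fun x => if h : S.Nonempty then S.inf' h (fun c => Met.d c x ^ q) else 1).sum

lemma perpt_bounds {m : ℕ} (Met : FinMetric m) (q : ℕ) (S : Finset (Fin m)) (x : Fin m) :
    0 ≤ (if h : S.Nonempty then S.inf' h (fun c => Met.d c x ^ q) else 1) ∧
    (if h : S.Nonempty then S.inf' h (fun c => Met.d c x ^ q) else 1) ≤ 1 := by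
  split_ifs with h
  · constructor
    · rw [Finset.le_inf'_iff]
      intro c _
      exact pow_nonneg (Met.nonneg c x) q
    · obtain ⟨c, hc⟩ := h
      exact (Finset.inf'_le _ hc).trans (pow_le_one₀ (Met.nonneg c x) (Met.diam_le_one c x))
  · norm_num

lemma costq_cons {m : ℕ} (Met : FinMetric m) (q : ℕ) (S : Finset (Fin m)) (x : Fin m)
    (D : Multiset (Fin m)) :
    costq Met q S D ≤ costq Met q S (x ::ₘ D) ∧
      costq Met q S (x ::ₘ D) ≤ costq Met q S D + 1 := by
  have h := perpt_bounds Met q S x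
  unfold costq
  rw [Multiset.map_cons, Multiset.sum_cons]
  constructor <;> linarith [h.1, h.2]

lemma costq_zero {m : ℕ} (Met : FinMetric m) (q : ℕ) (S : Finset (Fin m)) :
    costq Met q S 0 = 0 := by
  simp [costq]

/-- Weights of the exponential mechanism. -/
def wt {m : ℕ} (Met : FinMetric m) (q k : ℕ) (ε : ℝ) (D : Multiset (Fin m))
    (S : Finset (Fin m)) : ℝ≥0∞ :=
  if S.card = k then ENNReal.ofReal (Real.exp (-(ε * costq Met q S D))) else 0

lemma wt_sum_ne_top {m : ℕ} (Met : FinMetric m) (q k : ℕ) (ε : ℝ) (D : Multiset (Fin m)) :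
    ∑' S, wt Met q k ε D S ≠ ⊤ := by
  rw [tsum_fintype]
  refine ENNReal.sum_ne_top.2 fun S _ => ?_
  unfold wt
  split_ifs <;> simp

lemma wt_sum_ne_zero {m : ℕ} (Met : FinMetric m) (q k : ℕ) (hk : k ≤ m) (ε : ℝ)
    (D : Multiset (Fin m)) :
    ∑' S, wt Met q k ε D S ≠ 0 := by
  obtain ⟨S, -, hS⟩ := Finset.exists_subset_card_eq (s := (Finset.univ : Finset (Fin m)))
    (n := k) (by simpa using hk)
  intro h
  rw [ENNReal.tsum_eq_zero] at h
  have := h S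
  simp only [wt, hS, if_true, ENNReal.ofReal_eq_zero] at this
  exact absurd this (not_le.2 (Real.exp_pos _))

/-- The exponential mechanism. -/
def expMech {m : ℕ} (Met : FinMetric m) (q k : ℕ) (hk : k ≤ m) (ε : ℝ)
    (D : Multiset (Fin m)) : PMF (Finset (Fin m)) :=
  PMF.normalize (wt Met q k ε D) (wt_sum_ne_zero Met q k hk ε D) (wt_sum_ne_top Met q k ε D)

lemma wt_cons_le {m : ℕ} (Met : FinMetric m) (q k : ℕ) {ε : ℝ} (hε : 0 < ε)
    (D : Multiset (Fin m)) (x : Fin m) (S : Finset (Fin m)) :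
    wt Met q k ε (x ::ₘ D) S ≤ wt Met q k ε D S := by
  unfold wt
  split_ifs
  · apply ENNReal.ofReal_le_ofReal
    apply Real.exp_le_exp.2
    nlinarith [(costq_cons Met q S x D).1]
  · exact le_rfl

lemma wt_le_cons {m : ℕ} (Met : FinMetric m) (q k : ℕ) {ε : ℝ} (hε : 0 < ε)
    (D : Multiset (Fin m)) (x : Fin m) (S : Finset (Fin m)) :
    wt Met q k ε D S ≤ ENNReal.ofReal (Real.exp ε) * wt Met q k ε (x ::ₘ D) S := by
  unfold wt
  split_ifs
  · rw [← ENNReal.ofReal_mul (Real.exp_pos _).le, ← Real.exp_add]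
    apply ENNReal.ofReal_le_ofReal
    apply Real.exp_le_exp.2
    nlinarith [(costq_cons Met q S x D).2]
  · simp

lemma outer_le {O : Type*} (p r : PMF O) (E : ℝ≥0∞) (h : ∀ a, p a ≤ E * r a) (S : Set O) :
    p.toOuterMeasure S ≤ E * r.toOuterMeasure S := by
  rw [PMF.toOuterMeasure_apply, PMF.toOuterMeasure_apply, ← ENNReal.tsum_mul_left]
  refine ENNReal.tsum_le_tsum fun a => ?_
  by_cases ha : a ∈ S <;> simp [ha, h]

lemma expMech_dp {m : ℕ} (Met : FinMetric m) (q k : ℕ) (hk : k ≤ m) {ε : ℝ} (hε : 0 < ε) :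
    PureDP (expMech Met q k hk ε) ε := by
  intro D x S
  have hE0 : ENNReal.ofReal (Real.exp ε) ≠ 0 := by
    simpa using Real.exp_pos ε
  have hEt : ENNReal.ofReal (Real.exp ε) ≠ ⊤ := ENNReal.ofReal_ne_top
  constructor
  · apply outer_le
    intro a
    simp only [expMech, PMF.normalize_apply]
    rw [mul_left_comm]
    refine mul_le_mul' (wt_cons_le Met q k hε D x a) ?_
    have hZ : ∑' S, wt Met q k ε D S
        ≤ ENNReal.ofReal (Real.exp ε) * ∑' S, wt Met q k ε (x ::ₘ D) S := by
      rw [← ENNReal.tsum_mul_left]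
      exact ENNReal.tsum_le_tsum fun a => wt_le_cons Met q k hε D x a
    have h2 := ENNReal.inv_le_inv.2 hZ
    rw [ENNReal.mul_inv (Or.inl hE0) (Or.inl hEt)] at h2
    calc _ = ENNReal.ofReal (Real.exp ε) * ((ENNReal.ofReal (Real.exp ε))⁻¹ *
            (∑' S, wt Met q k ε (x ::ₘ D) S)⁻¹) := by
            rw [← mul_assoc, ENNReal.mul_inv_cancel hE0 hEt, one_mul]
      _ ≤ _ := mul_le_mul_right h2 _
  · apply outer_le
    intro a
    simp only [expMech, PMF.normalize_apply]
    rw [← mul_assoc]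
    refine mul_le_mul' (wt_le_cons Met q k hε D x a) ?_
    exact ENNReal.inv_le_inv.2 (ENNReal.tsum_le_tsum fun a => wt_cons_le Met q k hε D x a)

lemma expMech_tail {m : ℕ} (Met : FinMetric m) (q k : ℕ) (hk : k ≤ m) {ε : ℝ} (hε : 0 < ε)
    (D : Multiset (Fin m)) (A : ℝ) (β : ℝ) (hβ : 0 < β)
    (hA : (m : ℝ) ^ k * Real.exp (-(ε * A)) ≤ β) :
    ENNReal.ofReal (1 - β) ≤ (expMech Met q k hk ε D).toOuterMeasure
      {S | S.card = k ∧ ∀ T : Finset (Fin m), T.card = k →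
        costq Met q S D ≤ costq Met q T D + A} := by
  classical
  set p := expMech Met q k hk ε D with hp
  set G : Set (Finset (Fin m)) := {S | S.card = k ∧ ∀ T : Finset (Fin m), T.card = k →
        costq Met q S D ≤ costq Met q T D + A} with hG
  have hbad : ∀ S ∉ G, p S ≤ if S.card = k then ENNReal.ofReal (Real.exp (-(ε * A))) else 0 := by
    intro S hS
    simp only [hp, expMech, PMF.normalize_apply]
    by_cases hc : S.card = k
    · have : ∃ T : Finset (Fin m), T.card = k ∧ costq Met q T D + A < costq Met q S D := by
        by_contra! hcon
        exact hS ⟨hc, hcon⟩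
      obtain ⟨T, hT, hlt⟩ := this
      rw [if_pos hc, ← div_eq_mul_inv]
      apply ENNReal.div_le_of_le_mul
      calc wt Met q k ε D S ≤ ENNReal.ofReal (Real.exp (-(ε * A))) * wt Met q k ε D T := by
            simp only [wt, hc, hT, if_true]
            rw [← ENNReal.ofReal_mul (Real.exp_pos _).le, ← Real.exp_add]
            apply ENNReal.ofReal_le_ofReal
            apply Real.exp_le_exp.2
            nlinarith
        _ ≤ _ := mul_le_mul_right (ENNReal.le_tsum T) _
    · simp [wt, hc]
  have hsum : (1 : ℝ≥0∞) ≤ p.toOuterMeasure G + ENNReal.ofReal β := by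
    have h1 : ∑ S, p S = 1 := by
      have h := p.tsum_coe
      rwa [tsum_fintype] at h
    rw [← h1, PMF.toOuterMeasure_apply_fintype]
    have h2 : ∑ S : Finset (Fin m), (if S.card = k then ENNReal.ofReal (Real.exp (-(ε * A))) else 0)
        ≤ ENNReal.ofReal β := by
      rw [← Finset.sum_filter, Finset.sum_const, nsmul_eq_mul]
      have hcard : (Finset.univ.filter fun S : Finset (Fin m) => S.card = k).card ≤ m ^ k := by
        have : (Finset.univ.filter fun S : Finset (Fin m) => S.card = k)
            = Finset.powersetCard k Finset.univ := by
          ext S; simp [Finset.mem_powersetCard]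
        rw [this, Finset.card_powersetCard]
        simpa using Nat.choose_le_pow m k
      rw [← ENNReal.ofReal_natCast, ← ENNReal.ofReal_mul (Nat.cast_nonneg _)]
      apply ENNReal.ofReal_le_ofReal
      refine le_trans ?_ hA
      apply mul_le_mul_of_nonneg_right _ (Real.exp_pos _).le
      exact_mod_cast hcard
    refine le_trans ?_ (add_le_add le_rfl h2)
    rw [← Finset.sum_add_distrib]
    apply Finset.sum_le_sum
    intro S _
    by_cases hS : S ∈ G
    · rw [Set.indicator_of_mem hS]; exact le_self_add
    · rw [Set.indicator_of_notMem hS, zero_add]; exact hbad S hS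
  rw [ENNReal.ofReal_sub _ hβ.le, ENNReal.ofReal_one]
  exact tsub_le_iff_right.2 hsum

/-- a pure-DP `O(1)`-approximation for metric `k`-median (`q = 1`) and
`k`-means (`q = 2`) with error `O(k log(mn/β)/ε)`, where `n = |D|`. -/
theorem stmt7 :
    ∃ C₁ C₂ : ℝ, 0 < C₁ ∧ 0 < C₂ ∧
      ∀ (ε β : ℝ), 0 < ε → ε < 1 → 0 < β → β < 1 →
      ∀ q : ℕ, (q = 1 ∨ q = 2) →
      ∀ (m : ℕ) (Met : FinMetric m) (k : ℕ), k ≤ m →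
      ∃ M : Multiset (Fin m) → PMF (Finset (Fin m)),
        PureDP M ε ∧
        ∀ D : Multiset (Fin m),
          ENNReal.ofReal (1 - β) ≤
            (M D).toOuterMeasure
              {S : Finset (Fin m) | S.card = k ∧
                ∀ T : Finset (Fin m), T.card = k →
                  costq Met q S D ≤
                    C₁ * costq Met q T D +
                      C₂ * k * Real.log (m * D.card / β) / ε} := by
  refine ⟨1, 1, one_pos, one_pos, ?_⟩
  intro ε β hε _ hβ hβ1 q _ m Met k hk
  refine ⟨expMech Met q k hk ε, expMech_dp Met q k hk hε, ?_⟩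
  intro D
  have hsupp : ∀ P : Finset (Fin m) → Prop, (∀ S : Finset (Fin m), S.card = k → P S) →
      (expMech Met q k hk ε D).toOuterMeasure {S | S.card = k ∧ P S} = 1 := by
    intro P hP
    rw [PMF.toOuterMeasure_apply_eq_one_iff]
    intro S hS
    have hc : S.card = k := by
      by_contra hc
      rw [PMF.mem_support_iff] at hS
      exact hS (by simp [expMech, PMF.normalize_apply, wt, hc])
    exact ⟨hc, hP S hc⟩
  have hle1 : ENNReal.ofReal (1 - β) ≤ 1 := by
    rw [← ENNReal.ofReal_one]
    exact ENNReal.ofReal_le_ofReal (by linarith)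
  rcases Nat.eq_zero_or_pos k with rfl | hkpos
  · rw [hsupp]
    · exact hle1
    · intro S hS T hT
      rw [Finset.card_eq_zero] at hS hT
      subst hS; subst hT
      simp
  rcases Multiset.empty_or_exists_mem D with rfl | ⟨x, hx⟩
  · rw [hsupp]
    · exact hle1
    · intro S hS T hT
      simp [costq_zero]
  have hn : 1 ≤ D.card := Multiset.card_pos_iff_exists_mem.2 ⟨x, hx⟩
  have hnR : (1 : ℝ) ≤ D.card := by exact_mod_cast hn
  have hmR : (1 : ℝ) ≤ m := by exact_mod_cast (hkpos.trans_le hk)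
  have hmain := expMech_tail Met q k hk hε D (k * Real.log (m * D.card / β) / ε) β hβ (by
    have hpos : 0 < (m : ℝ) * D.card / β := by positivity
    have h1 : Real.exp (-(ε * (k * Real.log (m * D.card / β) / ε)))
        = (β / (m * D.card)) ^ k := by
      have : -(ε * (k * Real.log (m * D.card / β) / ε))
          = k * Real.log ((m * D.card / β)⁻¹) := by
        rw [Real.log_inv]; field_simp
      rw [this, Real.exp_nat_mul, Real.exp_log (inv_pos.2 hpos), inv_div]
    rw [h1, ← mul_pow]
    have h2 : (m : ℝ) * (β / (m * D.card)) = β / D.card := by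
      field_simp
    rw [h2]
    have h3 : β / D.card ≤ β := div_le_self hβ.le hnR
    have h0 : 0 ≤ β / D.card := by positivity
    exact (pow_le_of_le_one h0 (h3.trans hβ1.le) hkpos.ne').trans h3)
  simpa only [one_mul] using hmain
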